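/- Let d ∈ (−1, 0), b⁺, b⁻ ∈ ℝ and t ∈ ℝ. Define f : ℝ → ℝ by f(x) = b⁺((t−x)₊^d − (−x)₊^d) + b⁻((t−x)₋^d − (−x)₋^d). Then f ∈ L¹(ℝ), and for every ξ ≠ 0 its Fourier transform f̂(ξ) = ∫_ℝ f(x) e^{−iξx} dx equals Γ(d+1) · ((e^{−iξt} − 1)/|ξ|^{d+1}) · [ b⁺ exp( (iπ/2) sgn(ξ) (d+1) ) + b⁻ exp( −(iπ/2) sgn(ξ) (d+1) ) ]. -/

import Mathlib

open MeasureTheory Filter Topology Set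

/-- `x₊^d`: equals `x ^ d` if `x > 0` and `0` otherwise. -/
noncomputable def posPow (x d : ℝ) : ℝ := if 0 < x then x ^ d else 0

/-- `x₋^d`: equals `(-x) ^ d` if `x < 0` and `0` otherwise. -/
noncomputable def negPow (x d : ℝ) : ℝ := if x < 0 then (-x) ^ d else 0

/-!
Up to reflection, both halves of the kernel are increments `(u + t)₊^d - u₊^d`. For `0 < re z` the
Laplace transform of `u₊^d` is `Γ(d + 1) z^(-(d + 1))`: this is the Gamma integral when `z` is real,
and the identity theorem extends it to the half-plane. Hence the increment has transform
`(e^(z t) - 1) Γ(d + 1) z^(-(d + 1))`. The increment, unlike `u₊^d` itself, is integrable, being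
`O(u^(d - 1))` at infinity; as it also vanishes near `-∞`, its transform is continuous up to the
imaginary axis, and the values at `z = ± i ξ` are the Fourier transforms sought.
-/

theorem eqOn_re_pos_of_eq_ofReal {E : Type*} [NormedAddCommGroup E] [NormedSpace ℂ E]
    [CompleteSpace E] {f g : ℂ → E} (hf : DifferentiableOn ℂ f {z | 0 < z.re})
    (hg : DifferentiableOn ℂ g {z | 0 < z.re}) (hfg : ∀ r : ℝ, 0 < r → f r = g r) :
    EqOn f g {z | 0 < z.re} := by
  have hopen : IsOpen {z : ℂ | 0 < z.re} := isOpen_lt continuous_const Complex.continuous_re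
  have hreal : Tendsto Complex.ofReal (𝓝[>] 1) (𝓝[≠] 1) :=
    Complex.continuous_ofReal.continuousWithinAt.tendsto_nhdsWithin
      fun r hr => Complex.ofReal_ne_one.2 (ne_of_gt hr)
  refine (hf.analyticOnNhd hopen).eqOn_of_preconnected_of_frequently_eq (hg.analyticOnNhd hopen)
    (convex_halfSpace_re_gt 0).isPreconnected (z₀ := 1) (by simp)
    (hreal.frequently (Eventually.frequently ?_))
  filter_upwards [self_mem_nhdsWithin] with r hr using hfg r (one_pos.trans hr)

theorem norm_cexp_neg_mul_ofReal (z : ℂ) (u : ℝ) :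
    ‖Complex.exp (-(z * u))‖ = Real.exp (-(z.re * u)) := by
  simp [Complex.norm_exp]

theorem mul_exp_neg_two_mul_le {b : ℝ} (hb : 0 < b) (u : ℝ) :
    u * Real.exp (-(2 * b * u)) ≤ b⁻¹ * Real.exp (-(b * u)) := by
  have hexp : u ≤ b⁻¹ * Real.exp (b * u) := by
    rw [le_inv_mul_iff₀ hb]
    linarith [Real.add_one_le_exp (b * u)]
  calc u * Real.exp (-(2 * b * u))
      ≤ b⁻¹ * Real.exp (b * u) * Real.exp (-(2 * b * u)) := by gcongr
    _ = b⁻¹ * Real.exp (-(b * u)) := by rw [mul_assoc, ← Real.exp_add]; ring_nf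

theorem differentiableOn_integral_mul_cexp_neg {g : ℝ → ℂ}
    (hg : ∀ z : ℂ, 0 < z.re → IntegrableOn (fun u : ℝ => g u * Complex.exp (-(z * u))) (Ioi 0)) :
    DifferentiableOn ℂ (fun z : ℂ => ∫ u in Ioi (0 : ℝ), g u * Complex.exp (-(z * u)))
      {z | 0 < z.re} := by
  intro w (hw : 0 < w.re)
  obtain ⟨b, hb, hwb⟩ : ∃ b : ℝ, 0 < b ∧ 2 * b < w.re := ⟨w.re / 4, by linarith, by linarith⟩
  have hnhds : {z : ℂ | 2 * b < z.re} ∈ 𝓝 w :=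
    (isOpen_lt continuous_const Complex.continuous_re).mem_nhds hwb
  refine (hasDerivAt_integral_of_dominated_loc_of_deriv_le hnhds
    (F := fun z u => g u * Complex.exp (-(z * u)))
    (F' := fun z u => g u * Complex.exp (-(z * u)) * -u)
    (bound := fun u => b⁻¹ * ‖g u * Complex.exp (-(b * u))‖) ?_ (hg w hw)
    ((hg w hw).aestronglyMeasurable.mul (by fun_prop)) ?_
    ((hg b (by simpa using hb)).norm.const_mul _)
    ?_).2.differentiableAt.differentiableWithinAt
  · filter_upwards [hnhds] with z (hz : 2 * b < z.re)
    exact (hg z (by linarith)).aestronglyMeasurable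
  · filter_upwards [self_mem_ae_restrict measurableSet_Ioi] with u (hu : 0 < u) z
      (hz : 2 * b < z.re)
    calc ‖g u * Complex.exp (-(z * u)) * -u‖
        = ‖g u‖ * (u * Real.exp (-(z.re * u))) := by
          rw [norm_mul, norm_mul, norm_cexp_neg_mul_ofReal, norm_neg,
            Complex.norm_of_nonneg hu.le]
          ring
      _ ≤ ‖g u‖ * (u * Real.exp (-(2 * b * u))) := by gcongr
      _ ≤ ‖g u‖ * (b⁻¹ * Real.exp (-(b * u))) :=
          mul_le_mul_of_nonneg_left (mul_exp_neg_two_mul_le hb u) (norm_nonneg _)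
      _ = b⁻¹ * ‖g u * Complex.exp (-(b * u))‖ := by
          rw [norm_mul, norm_cexp_neg_mul_ofReal, Complex.ofReal_re]
          ring
  · refine Eventually.of_forall fun u z _ => ?_
    have hlin : HasDerivAt (fun z : ℂ => -(z * u)) (-u) z := by
      simpa using ((hasDerivAt_id z).mul_const (u : ℂ)).fun_neg
    simpa only [mul_assoc] using hlin.cexp.const_mul (g u)

theorem integrableOn_cpow_mul_cexp_neg {a z : ℂ} (ha : 0 < a.re) (hz : 0 < z.re) :
    IntegrableOn (fun u : ℝ => (u : ℂ) ^ (a - 1) * Complex.exp (-(z * u))) (Ioi 0) := by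
  have hreal : IntegrableOn (fun u : ℝ => u ^ (a.re - 1) * Real.exp (-(z.re * u))) (Ioi 0) := by
    simpa using integrableOn_rpow_mul_exp_neg_mul_rpow (s := a.re - 1) (p := 1) (by linarith)
      one_pos hz
  refine hreal.mono' (Measurable.aestronglyMeasurable (by fun_prop)) ?_
  filter_upwards [self_mem_ae_restrict measurableSet_Ioi] with u (hu : 0 < u)
  rw [norm_mul, norm_cexp_neg_mul_ofReal, Complex.norm_cpow_eq_rpow_re_of_pos hu, Complex.sub_re,
    Complex.one_re]

theorem integral_cpow_mul_cexp_neg {a z : ℂ} (ha : 0 < a.re) (hz : 0 < z.re) :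
    ∫ u in Ioi (0 : ℝ), (u : ℂ) ^ (a - 1) * Complex.exp (-(z * u)) =
      Complex.Gamma a * z ^ (-a) := by
  refine eqOn_re_pos_of_eq_ofReal (g := fun z => Complex.Gamma a * z ^ (-a))
    (differentiableOn_integral_mul_cexp_neg fun z hz => integrableOn_cpow_mul_cexp_neg ha hz)
    (fun w hw => ?_) (fun r hr => ?_) hz
  · exact ((differentiableAt_id.cpow_const (Or.inl hw)).const_mul
      (Complex.Gamma a)).differentiableWithinAt
  · have harg : (r : ℂ).arg ≠ Real.pi := by
      rw [Complex.arg_ofReal_of_nonneg hr.le]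
      exact Real.pi_ne_zero.symm
    rw [Complex.integral_cpow_mul_exp_neg_mul_Ioi ha hr, one_div, Complex.inv_cpow _ _ harg,
      Complex.cpow_neg, mul_comm]

theorem continuousOn_integral_mul_cexp_neg {h : ℝ → ℂ} (hh : Integrable h) {T : ℝ}
    (hT : ∀ u < T, h u = 0) :
    ContinuousOn (fun z : ℂ => ∫ u : ℝ, h u * Complex.exp (-(z * u))) {z | 0 ≤ z.re} := by
  intro w _
  refine continuousWithinAt_of_dominated (bound := fun u => ‖h u‖ * Real.exp ((w.re + 1) * |T|))
    ?_ ?_ (hh.norm.mul_const _) ?_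
  · exact Eventually.of_forall fun z => hh.aestronglyMeasurable.mul (by fun_prop)
  · have hre : ∀ᶠ z : ℂ in 𝓝 w, z.re < w.re + 1 :=
      Complex.continuous_re.continuousAt.eventually_lt_const (lt_add_one _)
    filter_upwards [self_mem_nhdsWithin, nhdsWithin_le_nhds hre] with z (hz : 0 ≤ z.re) hzw
    refine Eventually.of_forall fun u => ?_
    rcases lt_or_ge u T with hu | hu
    · simp [hT u hu]
    · have hexponent : -(z.re * u) ≤ (w.re + 1) * |T| :=
        calc -(z.re * u) = z.re * -u := by ring
          _ ≤ z.re * |T| := by gcongr; linarith [neg_le_abs T]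
          _ ≤ (w.re + 1) * |T| := by gcongr
      rw [norm_mul, norm_cexp_neg_mul_ofReal]
      gcongr
  · exact Eventually.of_forall fun u => Continuous.continuousWithinAt (by fun_prop)

theorem log_I_mul_ofReal {ξ : ℝ} (hξ : ξ ≠ 0) :
    Complex.log (Complex.I * ξ) =
      Real.log |ξ| + (Real.pi : ℂ) * Complex.I / 2 * (Real.sign ξ : ℝ) := by
  rcases hξ.lt_or_gt with hneg | hpos
  · rw [show Complex.I * ξ = ((-ξ : ℝ) : ℂ) * -Complex.I by push_cast; ring,
      Complex.log_ofReal_mul (neg_pos.2 hneg) (by simp), Complex.log_neg_I, abs_of_neg hneg,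
      Real.sign_of_neg hneg]
    push_cast
    ring
  · rw [mul_comm, Complex.log_ofReal_mul hpos Complex.I_ne_zero, Complex.log_I, abs_of_pos hpos,
      Real.sign_of_pos hpos]
    push_cast
    ring

theorem I_mul_ofReal_cpow {ξ : ℝ} (hξ : ξ ≠ 0) (a : ℝ) :
    (Complex.I * ξ) ^ (a : ℂ) = ((|ξ| ^ a : ℝ) : ℂ) *
      Complex.exp ((Real.pi : ℂ) * Complex.I / 2 * (Real.sign ξ : ℝ) * a) := by
  rw [Complex.cpow_def_of_ne_zero (by simpa using hξ), log_I_mul_ofReal hξ,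
    Real.rpow_def_of_pos (abs_pos.2 hξ), Complex.ofReal_exp, ← Complex.exp_add]
  push_cast
  ring_nf

/-- The increment `(u + t)₊^d - u₊^d` of the one-sided power. At `u = -x` it is the coefficient of
`b⁺` in the kernel; for the increment `-t`, at `u = x`, it is that of `b⁻`. -/
noncomputable def posPowIncrement (d t u : ℝ) : ℝ := posPow (u + t) d - posPow u d

theorem negPow_eq_posPow_neg (x d : ℝ) : negPow x d = posPow (-x) d := by
  simp only [negPow, posPow, neg_pos]

theorem posPow_sub_sub_posPow_neg (d t x : ℝ) :
    posPow (t - x) d - posPow (-x) d = posPowIncrement d t (-x) := by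
  rw [posPowIncrement, neg_add_eq_sub]

theorem negPow_sub_sub_negPow_neg (d t x : ℝ) :
    negPow (t - x) d - negPow (-x) d = posPowIncrement d (-t) x := by
  simp only [posPowIncrement, negPow_eq_posPow_neg, neg_sub, neg_neg, sub_eq_add_neg x t]

theorem posPow_eq_indicator (d : ℝ) :
    (fun u => posPow u d) = (Ioi 0).indicator fun u : ℝ => u ^ d := by
  ext u
  simp only [posPow, indicator_apply, mem_Ioi]

theorem locallyIntegrable_rpow {d : ℝ} (hd : -1 < d) : LocallyIntegrable fun u : ℝ => u ^ d := by
  intro x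
  refine ⟨Ioc (x - 1) (x + 1), Ioc_mem_nhds (by linarith) (by linarith), ?_⟩
  exact (intervalIntegrable_iff_integrableOn_Ioc_of_le (by linarith)).1
    (intervalIntegral.intervalIntegrable_rpow' hd)

theorem locallyIntegrable_posPow {d : ℝ} (hd : -1 < d) :
    LocallyIntegrable fun u => posPow u d := by
  rw [posPow_eq_indicator]
  exact (locallyIntegrable_rpow hd).indicator measurableSet_Ioi

theorem locallyIntegrable_posPowIncrement {d : ℝ} (hd : -1 < d) (t : ℝ) :
    LocallyIntegrable (posPowIncrement d t) := by
  have hshift : LocallyIntegrable ((fun u => posPow u d) ∘ Homeomorph.addRight t) :=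
    (locallyIntegrable_map_homeomorph (Homeomorph.addRight t)).1 <| by
      simpa [map_add_right_eq_self] using locallyIntegrable_posPow hd
  exact hshift.sub (locallyIntegrable_posPow hd)

theorem posPowIncrement_of_lt {d t u : ℝ} (hu : u < -|t|) : posPowIncrement d t u = 0 := by
  have hu0 : ¬ 0 < u := by linarith [abs_nonneg t]
  have hut : ¬ 0 < u + t := by linarith [le_abs_self t]
  simp [posPowIncrement, posPow, hu0, hut]

theorem isBigO_add_rpow_sub_rpow_atTop (d t : ℝ) :
    (fun u : ℝ => (u + t) ^ d - u ^ d) =O[atTop] fun u => u ^ (d - 1) := by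
  have hdiff : DifferentiableAt ℝ (fun x : ℝ => (1 + x) ^ d) 0 :=
    DifferentiableAt.rpow_const (by fun_prop) (Or.inl (by norm_num))
  have hzero : Tendsto (fun u : ℝ => t / u) atTop (𝓝 0) := tendsto_const_nhds.div_atTop tendsto_id
  have hratio : (fun u : ℝ => (1 + t / u) ^ d - 1) =O[atTop] fun u => u⁻¹ := by
    refine (hdiff.isBigO_sub.comp_tendsto hzero).congr (fun u => by simp) (fun u => sub_zero _)
      |>.trans ?_
    exact Asymptotics.isBigO_const_mul_self t _ _
  refine ((Asymptotics.isBigO_refl (fun u : ℝ => u ^ d) atTop).mul hratio).congr' ?_ ?_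
  · filter_upwards [eventually_gt_atTop 0, eventually_gt_atTop (-t)] with u hu hut
    have hpos : 0 ≤ 1 + t / u := by
      rw [one_add_div hu.ne']
      exact div_nonneg (by linarith) hu.le
    rw [mul_sub_one, ← Real.mul_rpow hu.le hpos, mul_one_add, mul_div_cancel₀ _ hu.ne']
  · filter_upwards [eventually_gt_atTop 0] with u hu
    rw [Real.rpow_sub_one hu.ne', div_eq_mul_inv]

theorem integrable_posPowIncrement {d : ℝ} (hd1 : -1 < d) (hd2 : d < 0) (t : ℝ) :
    Integrable (posPowIncrement d t) := by
  refine (locallyIntegrable_posPowIncrement hd1 t).integrable_of_isBigO_atBot_atTop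
    (g := fun _ => (0 : ℝ)) (g' := fun u : ℝ => u ^ (d - 1)) ?_
    ((integrable_zero _ _ _).integrableAtFilter _) ?_
    (integrableAtFilter_rpow_atTop_iff.2 (by linarith))
  · refine EventuallyEq.trans_isBigO ?_ (Asymptotics.isBigO_refl _ _)
    filter_upwards [eventually_lt_atBot (-|t|)] with u hu using posPowIncrement_of_lt hu
  · refine EventuallyEq.trans_isBigO ?_ (isBigO_add_rpow_sub_rpow_atTop d t)
    filter_upwards [eventually_gt_atTop 0, eventually_gt_atTop (-t)] with u hu hut
    simp [posPowIncrement, posPow, hu, show 0 < u + t by linarith]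

theorem posPow_mul_cexp_neg_eq_indicator (d : ℝ) (z : ℂ) :
    (fun u : ℝ => (posPow u d : ℂ) * Complex.exp (-(z * u))) =
      (Ioi 0).indicator fun u : ℝ => (u : ℂ) ^ ((d + 1 : ℂ) - 1) * Complex.exp (-(z * u)) := by
  ext u
  by_cases hu : 0 < u
  · simp [posPow, hu, Complex.ofReal_cpow hu.le]
  · simp [posPow, hu]

section HalfPlane

variable {d : ℝ} {z : ℂ}

theorem integrable_posPow_mul_cexp_neg (hd : -1 < d) (hz : 0 < z.re) :
    Integrable fun u : ℝ => (posPow u d : ℂ) * Complex.exp (-(z * u)) := by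
  rw [posPow_mul_cexp_neg_eq_indicator, integrable_indicator_iff measurableSet_Ioi]
  exact integrableOn_cpow_mul_cexp_neg (by simp; linarith) hz

theorem integral_posPow_mul_cexp_neg (hd : -1 < d) (hz : 0 < z.re) :
    ∫ u : ℝ, (posPow u d : ℂ) * Complex.exp (-(z * u)) =
      Real.Gamma (d + 1) * z ^ (-(d + 1) : ℂ) := by
  rw [posPow_mul_cexp_neg_eq_indicator, integral_indicator measurableSet_Ioi,
    integral_cpow_mul_cexp_neg (by simp; linarith) hz, ← Complex.Gamma_ofReal]
  push_cast
  rfl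

theorem posPow_add_mul_cexp_neg (t u : ℝ) :
    (posPow (u + t) d : ℂ) * Complex.exp (-(z * u)) =
      Complex.exp (z * t) * ((posPow (u + t) d : ℂ) * Complex.exp (-(z * (u + t : ℝ)))) := by
  rw [mul_left_comm, ← Complex.exp_add]
  push_cast
  ring_nf

theorem integral_posPowIncrement_mul_cexp_neg_of_re_pos (hd : -1 < d) (hz : 0 < z.re) (t : ℝ) :
    ∫ u : ℝ, (posPowIncrement d t u : ℂ) * Complex.exp (-(z * u)) =
      (Complex.exp (z * t) - 1) * (Real.Gamma (d + 1) * z ^ (-(d + 1) : ℂ)) := by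
  have hint := integrable_posPow_mul_cexp_neg hd hz
  simp only [posPowIncrement, Complex.ofReal_sub, sub_mul, posPow_add_mul_cexp_neg t]
  rw [integral_sub ((hint.comp_add_right t).const_mul _) hint, integral_const_mul,
    integral_add_right_eq_self fun u : ℝ => (posPow u d : ℂ) * Complex.exp (-(z * u)),
    integral_posPow_mul_cexp_neg hd hz, one_mul]

theorem integral_posPowIncrement_mul_cexp_neg (hd1 : -1 < d) (hd2 : d < 0) (hz : 0 ≤ z.re)
    (hz0 : z ≠ 0) (t : ℝ) :
    ∫ u : ℝ, (posPowIncrement d t u : ℂ) * Complex.exp (-(z * u)) =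
      (Complex.exp (z * t) - 1) * (Real.Gamma (d + 1) * z ^ (-(d + 1) : ℂ)) := by
  have hslit : ∀ w ∈ {w : ℂ | 0 ≤ w.re} \ {0}, w ∈ Complex.slitPlane := by
    rintro w ⟨hre : 0 ≤ w.re, hw : w ≠ 0⟩
    rw [Complex.mem_slitPlane_iff]
    by_contra! h
    exact hw (Complex.ext (le_antisymm h.1 hre) h.2)
  have hsub : {w : ℂ | 0 < w.re} ⊆ {w : ℂ | 0 ≤ w.re} \ {0} := fun w (hw : 0 < w.re) =>
    ⟨hw.le, fun h : w = 0 => by simp [h] at hw⟩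
  have hclosure : {w : ℂ | 0 ≤ w.re} \ {0} ⊆ closure {w | 0 < w.re} :=
    (Complex.closure_setOfPred_lt_re 0).symm ▸ sdiff_subset
  refine EqOn.of_subset_closure
    (g := fun z : ℂ => (Complex.exp (z * t) - 1) * (Real.Gamma (d + 1) * z ^ (-(d + 1) : ℂ)))
    (fun w hw => integral_posPowIncrement_mul_cexp_neg_of_re_pos hd1 hw t)
    ?_ ?_ hsub hclosure ⟨hz, hz0⟩
  · exact (continuousOn_integral_mul_cexp_neg (integrable_posPowIncrement hd1 hd2 t).ofReal
      (T := -|t|) fun u hu => by simp [posPowIncrement_of_lt hu]).mono sdiff_subset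
  · exact ContinuousOn.mul (by fun_prop)
      (continuousOn_const.mul (continuousOn_id.cpow_const hslit))

end HalfPlane

theorem fourierIntegral_posPowIncrement {d ξ : ℝ} (hd1 : -1 < d) (hd2 : d < 0) (hξ : ξ ≠ 0)
    (t : ℝ) :
    ∫ u : ℝ, (posPowIncrement d t u : ℂ) * Complex.exp (-(Complex.I * ξ * u)) =
      Real.Gamma (d + 1) * ((Complex.exp (Complex.I * ξ * t) - 1) / (|ξ| ^ (d + 1) : ℝ)) *
        Complex.exp (-((Real.pi : ℂ) * Complex.I / 2 * (Real.sign ξ : ℝ) * (d + 1))) := by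
  have hpow := I_mul_ofReal_cpow hξ (-(d + 1))
  rw [Real.rpow_neg (abs_nonneg ξ)] at hpow
  push_cast at hpow
  rw [integral_posPowIncrement_mul_cexp_neg hd1 hd2 (by simp) (by simpa using hξ), hpow]
  ring_nf

theorem fourierIntegral_posPowIncrement_neg {d ξ : ℝ} (hd1 : -1 < d) (hd2 : d < 0) (hξ : ξ ≠ 0)
    (t : ℝ) :
    ∫ x : ℝ, (posPowIncrement d t (-x) : ℂ) * Complex.exp (-(Complex.I * ξ * x)) =
      Real.Gamma (d + 1) * ((Complex.exp (-(Complex.I * ξ * t)) - 1) / (|ξ| ^ (d + 1) : ℝ)) *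
        Complex.exp ((Real.pi : ℂ) * Complex.I / 2 * (Real.sign ξ : ℝ) * (d + 1)) := by
  rw [← integral_neg_eq_self]
  simpa [Real.sign_neg] using fourierIntegral_posPowIncrement hd1 hd2 (neg_ne_zero.2 hξ) t

theorem integrable_ofReal_mul_cexp_neg_I_mul {g : ℝ → ℝ} (hg : Integrable g) (ξ : ℝ) :
    Integrable fun x : ℝ => (g x : ℂ) * Complex.exp (-(Complex.I * ξ * x)) := by
  refine hg.ofReal.mul_bdd (c := 1) (by fun_prop) (Eventually.of_forall fun x => ?_)
  simp [norm_cexp_neg_mul_ofReal]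

/-- Fourier transform of the linear fractional stable motion kernel. -/
theorem stmt_9 (d : ℝ) (hd1 : -1 < d) (hd2 : d < 0) (bp bm t : ℝ)
    (f : ℝ → ℝ)
    (hf : ∀ x : ℝ, f x = bp * (posPow (t - x) d - posPow (-x) d)
        + bm * (negPow (t - x) d - negPow (-x) d)) :
    Integrable f ∧
      ∀ ξ : ℝ, ξ ≠ 0 →
        (∫ x : ℝ, (f x : ℂ) * Complex.exp (-(Complex.I * ξ * x))) =
          (Real.Gamma (d + 1) : ℂ) *
            ((Complex.exp (-(Complex.I * ξ * t)) - 1) / ((|ξ| ^ (d + 1) : ℝ) : ℂ)) *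
            ((bp : ℂ) * Complex.exp ((Real.pi : ℂ) * Complex.I / 2 * (Real.sign ξ : ℝ) * (d + 1)) +
             (bm : ℂ) * Complex.exp (-((Real.pi : ℂ) * Complex.I / 2 * (Real.sign ξ : ℝ) * (d + 1)))) := by
  obtain rfl : f = fun x =>
      bp * posPowIncrement d t (-x) + bm * posPowIncrement d (-t) x := by
    ext x
    rw [hf, posPow_sub_sub_posPow_neg, negPow_sub_sub_negPow_neg]
  have hpos : Integrable fun x => posPowIncrement d t (-x) :=
    (integrable_posPowIncrement hd1 hd2 t).comp_neg
  have hneg : Integrable (posPowIncrement d (-t)) := integrable_posPowIncrement hd1 hd2 (-t)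
  refine ⟨(hpos.const_mul bp).add (hneg.const_mul bm), fun ξ hξ => ?_⟩
  simp only [Complex.ofReal_add, Complex.ofReal_mul, add_mul, mul_assoc (bp : ℂ),
    mul_assoc (bm : ℂ)]
  rw [integral_add ((integrable_ofReal_mul_cexp_neg_I_mul hpos ξ).const_mul _)
      ((integrable_ofReal_mul_cexp_neg_I_mul hneg ξ).const_mul _),
    integral_const_mul, integral_const_mul, fourierIntegral_posPowIncrement_neg hd1 hd2 hξ,
    fourierIntegral_posPowIncrement hd1 hd2 hξ, Complex.ofReal_neg, mul_neg]
  ring
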